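/- arXiv:2506.12789 — 2 statements merged into one kernel-verified Lean document; each statement's English description precedes it below -/
import Mathlib

section
/- Let d be a positive integer with ν₂(d) = 2 (i.e., d ≡ 4 (mod 8)) and let n be a positive integer. Then ν₂(W_d(n)) = 3·s₂(n) if and only if the binary expansion of n does not contain two adjacent 1s, i.e., for every i, n does not have both bit i and bit i+1 equal to 1. -/
/-- `Wstar d n` is the number of Abelian squares: the sum over all tuples
`(x₁,…,x_d)` of nonnegative integers summing to `n` of the square of the
multinomial coefficient `n!/(x₁!⋯x_d!)`. -/
def Wstar (d n : ℕ) : ℕ :=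
  ∑ x ∈ Finset.Nat.antidiagonalTuple d n, (Nat.multinomial Finset.univ x) ^ 2

/-- `W d n` is the number of `2n`-step closed walks at the origin in `ℤ^d`. -/
def W (d n : ℕ) : ℕ := Nat.choose (2 * n) n * Wstar d n

/-- `s2 n` is the number of ones in the binary expansion of `n`. -/
def s2 (n : ℕ) : ℕ := (Nat.digits 2 n).sum

/-!
Let `s = s2`. By Kummer's theorem `s k + s m = s (k + m) + v₂ (choose (k + m) k)`, so
`v₂ (W d n) = s n + v₂ (Wstar d n)`, and `s (3 * n) = 2 * s n` holds exactly when `n + 2 * n` has no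
carries, i.e. when `n` has no two adjacent ones. It remains to see that `v₂ (Wstar d n) = 2 * s n`
if and only if `s (3 * n) = 2 * s n`, which only requires `Wstar d n` modulo `2 * 4 ^ s n`.

For `d = 4` these are the Domb numbers, and
`Wstar 4 n = ∑ k ≤ n, (-1) ^ k * 16 ^ (n - k) * (n + 2 * k)! (2 * k)! / ((n - k)! k!⁵)`,
since both sides satisfy the same three-term recurrence. Every term with `k < n` vanishes modulo
`2 * 4 ^ s n`, and the term `k = n` has valuation `4 * s n - s (3 * n)`.

The general case reduces to `d = 4` through the convolution
`Wstar (d + e) n = ∑ i + j = n, (choose n i) ^ 2 * Wstar d i * Wstar e j`. Inductively it gives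
`4 ^ s n ∣ Wstar (4 * m) n`, and pairing `(i, j)` with `(j, i)` in the convolution of
`Wstar (4 * m)` with itself gains a further factor `2` for `Wstar (8 * m) n` with `n ≠ 0`. Hence
`Wstar (8 * m + 4) n ≡ Wstar 4 n` modulo `2 * 4 ^ s n`.
-/

section DigitSum

/- Mathlib states this form of Kummer's theorem with a truncated subtraction, which hides that the
digit sum is subadditive. -/
theorem sum_digits_add_sum_digits (p : ℕ) [Fact p.Prime] (k m : ℕ) :
    (p.digits k).sum + (p.digits m).sum =
      (p.digits (k + m)).sum + (p - 1) * padicValNat p ((k + m).choose k) := by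
  have valuation_factorial : padicValNat p (k + m).factorial =
      padicValNat p ((k + m).choose k) + padicValNat p k.factorial + padicValNat p m.factorial := by
    rw [← Nat.add_choose_mul_factorial_mul_factorial, Nat.choose_symm_add,
      padicValNat.mul (mul_ne_zero (Nat.choose_pos (by omega)).ne' k.factorial_ne_zero)
        m.factorial_ne_zero,
      padicValNat.mul (Nat.choose_pos (by omega)).ne' k.factorial_ne_zero]
  have legendre (n : ℕ) : (p - 1) * padicValNat p n.factorial + (p.digits n).sum = n := by
    rw [sub_one_mul_padicValNat_factorial, Nat.sub_add_cancel (Nat.digit_sum_le p n)]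
  have legendre_add := legendre (k + m)
  rw [valuation_factorial, mul_add, mul_add] at legendre_add
  linarith [legendre k, legendre m]

theorem s2_add_s2 (k m : ℕ) :
    s2 k + s2 m = s2 (k + m) + padicValNat 2 ((k + m).choose k) := by
  simpa [s2] using sum_digits_add_sum_digits 2 k m

theorem s2_add_le (k m : ℕ) : s2 (k + m) ≤ s2 k + s2 m :=
  (s2_add_s2 k m).symm ▸ Nat.le_add_right _ _

theorem s2_le_self (n : ℕ) : s2 n ≤ n := Nat.digit_sum_le 2 n

theorem s2_two_mul (n : ℕ) : s2 (2 * n) = s2 n := by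
  rcases n.eq_zero_or_pos with rfl | hn
  · rfl
  · simp [s2, Nat.digits_base_mul one_lt_two hn]

theorem s2_two_mul_add_one (n : ℕ) : s2 (2 * n + 1) = s2 n + 1 := by
  rw [s2, add_comm, Nat.digits_add 2 one_lt_two 1 n one_lt_two (Or.inl one_ne_zero),
    List.sum_cons, add_comm, s2]

theorem s2_add_eq_iff_testBit (m n : ℕ) :
    s2 (m + n) = s2 m + s2 n ↔ ∀ i, ¬(m.testBit i = true ∧ n.testBit i = true) := by
  have even_div (a : ℕ) : 2 * a / 2 = a := by omega
  have odd_div (a : ℕ) : (2 * a + 1) / 2 = a := by omega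
  induction m using Nat.evenOddRec generalizing n with
  | h0 => simp [s2]
  | h_even a ih =>
    rw [← Nat.and_forall_add_one]
    rcases n.even_or_odd' with ⟨b, rfl | rfl⟩
    · simp only [Nat.testBit_succ, even_div, ← ih, ← mul_add, s2_two_mul]
      simp
    · simp only [Nat.testBit_succ, even_div, odd_div, ← ih, ← add_assoc, ← mul_add, s2_two_mul,
        s2_two_mul_add_one]
      simp
  | h_odd a ih =>
    rw [← Nat.and_forall_add_one]
    rcases n.even_or_odd' with ⟨b, rfl | rfl⟩
    · rw [add_right_comm, ← mul_add]
      simp only [Nat.testBit_succ, even_div, odd_div, ← ih, s2_two_mul, s2_two_mul_add_one]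
      simp [add_right_comm]
    · have both_odd : 2 * a + 1 + (2 * b + 1) = 2 * (a + b + 1) := by ring
      have carry_lt : s2 (a + b + 1) < s2 a + s2 b + 2 :=
        calc s2 (a + b + 1) ≤ s2 a + s2 b + s2 1 :=
              (s2_add_le _ _).trans (Nat.add_le_add_right (s2_add_le a b) _)
          _ < s2 a + s2 b + 2 := by simp [s2]
      rw [both_odd, s2_two_mul, s2_two_mul_add_one, s2_two_mul_add_one]
      exact iff_of_false (by omega) fun h => h.1 (by simp)

theorem s2_three_mul_le (n : ℕ) : s2 (3 * n) ≤ 2 * s2 n := by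
  have h := s2_add_le n (2 * n)
  rw [s2_two_mul] at h
  convert h using 2 <;> ring

theorem s2_three_mul_eq_iff_testBit (n : ℕ) :
    s2 (3 * n) = 2 * s2 n ↔ ∀ i, ¬(n.testBit i = true ∧ n.testBit (i + 1) = true) := by
  have carry_free := s2_add_eq_iff_testBit (2 * n) n
  rw [s2_two_mul, ← two_mul, show 2 * n + n = 3 * n by ring] at carry_free
  rw [carry_free]
  refine ⟨fun h i hi => h (i + 1) ⟨?_, hi.2⟩, fun h i hi => ?_⟩
  · simpa [Nat.testBit_succ] using hi.1
  · cases i with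
    | zero => simp at hi
    | succ i => exact h i ⟨by simpa [Nat.testBit_succ] using hi.1, hi.2⟩

end DigitSum

section GeneratingFunction

open PowerSeries Finset.HasAntidiagonal

/-- The power series `∑ xⁿ / n!²`, equal to `I₀(2√x)` for the modified Bessel function `I₀`; its
`d`-th power is the doubly exponential generating function of `Wstar d`. -/
noncomputable def besselSeries : ℚ⟦X⟧ := mk fun n => 1 / (n.factorial : ℚ) ^ 2

theorem sum_antidiagonalTuple_prod {R : Type*} [CommSemiring R] (g : ℕ → R) (d n : ℕ) :
    ∑ x ∈ Finset.Nat.antidiagonalTuple d n, ∏ i, g (x i) = coeff n (mk g ^ d) := by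
  rw [← Finset.piAntidiag_univ_fin_eq_antidiagonalTuple, ← Fin.prod_const, coeff_prod]
  refine Finset.sum_equiv Finsupp.equivFunOnFinite.symm (fun x => ?_) (fun x _ => ?_)
  · simp
  · simp

theorem Wstar_eq_coeff (d n : ℕ) :
    (Wstar d n : ℚ) = (n.factorial : ℚ) ^ 2 * coeff n (besselSeries ^ d) := by
  rw [besselSeries, ← sum_antidiagonalTuple_prod, Wstar, Nat.cast_sum, Finset.mul_sum]
  refine Finset.sum_congr rfl fun x hx => ?_
  rw [Finset.Nat.mem_antidiagonalTuple] at hx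
  have multinomial_mul : (∏ i, ((x i).factorial : ℚ)) * Nat.multinomial Finset.univ x =
      n.factorial := by
    exact_mod_cast hx ▸ Nat.multinomial_spec Finset.univ x
  have prod_factorial_ne_zero : ∏ i, ((x i).factorial : ℚ) ≠ 0 :=
    Finset.prod_ne_zero_iff.2 fun i _ => Nat.cast_ne_zero.2 (Nat.factorial_ne_zero _)
  rw [← multinomial_mul, Finset.prod_div_distrib, Finset.prod_pow]
  push_cast
  field_simp
  simp

theorem Wstar_zero_right (d : ℕ) : Wstar d 0 = 1 := by
  simp [Wstar, Finset.Nat.antidiagonalTuple_zero_right, Nat.multinomial]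

theorem Wstar_zero_left {n : ℕ} (hn : n ≠ 0) : Wstar 0 n = 0 := by
  obtain ⟨m, rfl⟩ := Nat.exists_eq_succ_of_ne_zero hn
  simp [Wstar]

theorem Wstar_pos {d : ℕ} (hd : 0 < d) (n : ℕ) : 0 < Wstar d n := by
  refine Finset.sum_pos (fun x _ => pow_pos (Nat.multinomial_pos _ _) 2)
    ⟨Pi.single ⟨0, hd⟩ n, ?_⟩
  simp [Finset.Nat.mem_antidiagonalTuple]

theorem Wstar_add (d e n : ℕ) :
    Wstar (d + e) n =
      ∑ p ∈ antidiagonal n, n.choose p.1 ^ 2 * (Wstar d p.1 * Wstar e p.2) := by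
  apply Nat.cast_injective (R := ℚ)
  rw [Wstar_eq_coeff, pow_add, coeff_mul, Finset.mul_sum]
  push_cast
  refine Finset.sum_congr rfl fun p hp => ?_
  obtain rfl := mem_antidiagonal.1 hp
  rw [Wstar_eq_coeff, Wstar_eq_coeff, Nat.cast_add_choose]
  have : (p.1.factorial : ℚ) ≠ 0 := by positivity
  have : (p.2.factorial : ℚ) ≠ 0 := by positivity
  field_simp

/-- The Euler operator `x d/dx` on power series. -/
noncomputable def eulerDerivation : Derivation ℚ ℚ⟦X⟧ ℚ⟦X⟧ := (X : ℚ⟦X⟧) • derivative ℚ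

theorem coeff_eulerDerivation (f : ℚ⟦X⟧) (n : ℕ) :
    coeff n (eulerDerivation f) = n * coeff n f := by
  cases n with
  | zero => simp [eulerDerivation]
  | succ n => simp [eulerDerivation, coeff_succ_X_mul, coeff_derivative, mul_comm]

theorem eulerDerivation_X : eulerDerivation X = X := by
  simp [eulerDerivation]

theorem eulerDerivation_eulerDerivation_besselSeries :
    eulerDerivation (eulerDerivation besselSeries) = X * besselSeries := by
  ext n
  cases n with
  | zero => simp [coeff_eulerDerivation]
  | succ n =>
    rw [coeff_eulerDerivation, coeff_eulerDerivation, coeff_succ_X_mul, besselSeries, coeff_mk,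
      coeff_mk, Nat.factorial_succ]
    have : (n.factorial : ℚ) ≠ 0 := by positivity
    push_cast
    field_simp

/- The operator annihilating `f ^ 4` is the symmetric fourth power of `D ^ 2 - x`. -/
theorem derivation_iterate_five_pow_four {R A : Type*} [CommRing R] [CommRing A] [Algebra R A]
    (D : Derivation R A A) {x f : A} (hx : D x = x) (hf : D (D f) = x * f) :
    D (D (D (D (D (f ^ 4))))) =
      4 * D (D (D (x * f ^ 4))) + 6 * D (D (x * D (f ^ 4))) + 6 * D (x * D (D (f ^ 4))) +
        4 * (x * D (D (D (f ^ 4)))) -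
      (24 * D (x * (x * f ^ 4)) + 16 * (x * D (x * f ^ 4)) + 24 * (x * (x * D (f ^ 4)))) := by
  simp only [D.leibniz, D.leibniz_pow, hx, hf, smul_eq_mul, nsmul_eq_mul, map_add, D.map_natCast,
    Nat.reduceSub, pow_one, mul_zero, map_zero]
  push_cast
  ring

theorem Wstar_four_recurrence (n : ℕ) :
    (n + 2) ^ 3 * Wstar 4 (n + 2) + 64 * (n + 1) ^ 3 * Wstar 4 n =
      2 * (2 * n + 3) * (5 * (n + 1) * (n + 2) + 2) * Wstar 4 (n + 1) := by
  have coeff_ofNat_mul (c m : ℕ) [c.AtLeastTwo] (f : ℚ⟦X⟧) :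
      coeff m (ofNat(c) * f) = ofNat(c) * coeff m f := by
    rw [← map_ofNat C, coeff_C_mul]
  have ode := congrArg (coeff (n + 2)) (derivation_iterate_five_pow_four eulerDerivation
    eulerDerivation_X eulerDerivation_eulerDerivation_besselSeries)
  simp only [map_add, map_sub, coeff_ofNat_mul, coeff_eulerDerivation, coeff_succ_X_mul] at ode
  apply Nat.cast_injective (R := ℚ)
  push_cast at ode ⊢
  rw [Wstar_eq_coeff, Wstar_eq_coeff, Wstar_eq_coeff]
  simp only [Nat.factorial_succ]
  push_cast
  linear_combination ((n + 1) * n.factorial : ℚ) ^ 2 * ode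

end GeneratingFunction

section DombNumbers

/-- The positive integer `(n + 2k)! (2k)! / ((n - k)! k!⁵)` for `k ≤ n`, and `0` for `n < k`. -/
def dombCoeff (n k : ℕ) : ℕ :=
  (n + 2 * k).choose (3 * k) * (3 * k).choose k * (2 * k).choose k ^ 2

/-- The `k`-th term of the single-sum formula for the Domb number `Wstar 4 n`. For `n < k` the
truncated exponent `n - k` is harmless since `dombCoeff n k = 0`. -/
def dombSummand (n k : ℕ) : ℤ := (-1) ^ k * 16 ^ (n - k) * dombCoeff n k

theorem dombCoeff_add_self (k j : ℕ) :
    (dombCoeff (k + j) k : ℚ) =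
      (3 * k + j).factorial * (2 * k).factorial / (j.factorial * k.factorial ^ 5) := by
  have choose_shift : k + j + 2 * k = 3 * k + j := by ring
  have choose_three : 3 * k = k + 2 * k := by ring
  rw [dombCoeff, choose_shift]
  push_cast
  rw [Nat.cast_add_choose, choose_three, Nat.cast_add_choose, two_mul k, Nat.cast_add_choose]
  have : (k.factorial : ℚ) ≠ 0 := by positivity
  have : ((k + k).factorial : ℚ) ≠ 0 := by positivity
  have : ((k + (k + k)).factorial : ℚ) ≠ 0 := by positivity
  field_simp

theorem dombSummand_add_self (k j : ℕ) :
    (dombSummand (k + j) k : ℚ) =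
      (-1) ^ k * 16 ^ j * ((3 * k + j).factorial * (2 * k).factorial /
        (j.factorial * k.factorial ^ 5)) := by
  rw [← dombCoeff_add_self, dombSummand, Nat.add_sub_cancel_left]
  push_cast
  rfl

theorem dombSummand_of_lt {n k : ℕ} (h : n < k) : dombSummand n k = 0 := by
  simp [dombSummand, dombCoeff, Nat.choose_eq_zero_of_lt (show n + 2 * k < 3 * k by omega)]

theorem dombSummand_succ_left (n k : ℕ) :
    (n + 1 - k) * dombSummand (n + 1) k = 16 * (n + 1 + 2 * k) * dombSummand n k := by
  rcases lt_trichotomy k (n + 1) with h | rfl | h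
  · obtain ⟨j, rfl⟩ := Nat.exists_eq_add_of_le (Nat.lt_succ_iff.1 h)
    apply Int.cast_injective (α := ℚ)
    push_cast
    rw [dombSummand_add_self, add_assoc k, dombSummand_add_self, ← add_assoc, Nat.factorial_succ,
      Nat.factorial_succ]
    push_cast
    have : (j.factorial : ℚ) ≠ 0 := by positivity
    have : (k.factorial : ℚ) ≠ 0 := by positivity
    field_simp
    ring
  · simp [dombSummand_of_lt (Nat.lt_succ_self n)]
  · simp [dombSummand_of_lt h, dombSummand_of_lt (Nat.lt_of_succ_lt h)]

theorem dombSummand_succ_right (n k : ℕ) :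
    8 * (k + 1) ^ 4 * dombSummand n (k + 1) =
      -((n + 2 * k + 2) * (n + 2 * k + 1) * (2 * k + 1) * (n - k) * dombSummand n k) := by
  rcases lt_trichotomy k n with h | rfl | h
  · obtain ⟨j, rfl⟩ := Nat.exists_eq_add_of_lt h
    apply Int.cast_injective (α := ℚ)
    push_cast
    rw [show k + j + 1 = k + 1 + j by ring, dombSummand_add_self, add_assoc k,
      dombSummand_add_self, show 3 * (k + 1) + j = 3 * k + j + 1 + 1 + 1 by ring,
      show 3 * k + (1 + j) = 3 * k + j + 1 by ring, add_comm 1 j, mul_add_one 2 k]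
    simp only [Nat.factorial_succ, pow_succ]
    push_cast
    have : (j.factorial : ℚ) ≠ 0 := by positivity
    have : (k.factorial : ℚ) ≠ 0 := by positivity
    field_simp
    ring
  · simp [dombSummand_of_lt (Nat.lt_succ_self k)]
  · simp [dombSummand_of_lt h, dombSummand_of_lt (Nat.lt_succ_of_lt h)]

/-- The recurrence operator of the Domb numbers, applied to `dombSummand` at fixed `k`. -/
def dombOperator (n k : ℕ) : ℤ :=
  (n + 2) ^ 3 * dombSummand (n + 2) k + 64 * (n + 1) ^ 3 * dombSummand n k -
    2 * (2 * n + 3) * (5 * (n + 1) * (n + 2) + 2) * dombSummand (n + 1) k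

theorem eight_mul_dombOperator (n k : ℕ) :
    (n + 2 * k + 1) * (n + 2 * k + 2) * (8 * dombOperator n k) =
      3 * (3 * n + 5) * ((n + 2 * k + 1) * (n + 2 * k + 2) * (2 * k + 1) * (n + 2 - k) +
        8 * k ^ 4) * dombSummand (n + 2) k := by
  have step_n := dombSummand_succ_left n k
  have step_succ_n := dombSummand_succ_left (n + 1) k
  push_cast at step_succ_n
  rw [dombOperator]
  linear_combination ((2 * n + 3) * (5 * (n + 1) * (n + 2) + 2) * (n + 2 * k + 1)
    - 2 * (n + 1) ^ 3 * (n + 1 - k)) * step_succ_n -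
    32 * (n + 1) ^ 3 * (n + 2 * k + 2) * step_n

/- The right-hand side is the certificate found by Zeilberger's algorithm. -/
theorem eight_mul_sum_dombOperator (n m : ℕ) :
    8 * ∑ k ∈ Finset.range (m + 1), dombOperator n k =
      3 * (3 * n + 5) * (2 * m + 1) * (n + 2 - m) * dombSummand (n + 2) m := by
  induction m with
  | zero =>
    have h := eight_mul_dombOperator n 0
    have : ((n + 1) * (n + 2) : ℤ) ≠ 0 := by positivity
    apply mul_left_cancel₀ this
    simp only [zero_add, Finset.sum_range_one]
    push_cast at h ⊢
    linear_combination h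
  | succ m ih =>
    have step := eight_mul_dombOperator n (m + 1)
    have ratio := dombSummand_succ_right (n + 2) m
    have : ((n + 2 * (m + 1) + 1) * (n + 2 * (m + 1) + 2) : ℤ) ≠ 0 := by positivity
    rw [Finset.sum_range_succ, mul_add, ih]
    apply mul_left_cancel₀ this
    push_cast at step ratio ⊢
    linear_combination step + 3 * (3 * n + 5) * ratio

theorem sum_dombSummand_of_le {n N : ℕ} (h : n ≤ N) :
    ∑ k ∈ Finset.range (N + 1), dombSummand n k = ∑ k ∈ Finset.range (n + 1), dombSummand n k :=
  (Finset.sum_subset (Finset.range_mono (by omega)) fun k _ hk =>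
    dombSummand_of_lt (by simpa [Nat.lt_succ_iff] using hk)).symm

theorem sum_dombSummand_recurrence (n : ℕ) :
    (n + 2) ^ 3 * ∑ k ∈ Finset.range (n + 3), dombSummand (n + 2) k +
        64 * (n + 1) ^ 3 * ∑ k ∈ Finset.range (n + 1), dombSummand n k =
      2 * (2 * n + 3) * (5 * (n + 1) * (n + 2) + 2) *
        ∑ k ∈ Finset.range (n + 2), dombSummand (n + 1) k := by
  rw [← sum_dombSummand_of_le (show n ≤ n + 2 by omega),
    ← sum_dombSummand_of_le (show n + 1 ≤ n + 2 by omega)]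
  have telescoped := eight_mul_sum_dombOperator n (n + 2)
  simp only [dombOperator, Finset.sum_sub_distrib, Finset.sum_add_distrib, ← Finset.mul_sum]
    at telescoped
  push_cast at telescoped
  linarith

theorem Wstar_four_eq_sum_dombSummand (n : ℕ) :
    (Wstar 4 n : ℤ) = ∑ k ∈ Finset.range (n + 1), dombSummand n k := by
  induction n using Nat.twoStepInduction with
  | zero => simp [Wstar_zero_right, dombSummand, dombCoeff]
  | one => decide
  | more n ih ih' =>
    have : ((n + 2) ^ 3 : ℤ) ≠ 0 := by positivity
    apply mul_left_cancel₀ this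
    have recurrence : ((n + 2) ^ 3 * Wstar 4 (n + 2) + 64 * (n + 1) ^ 3 * Wstar 4 n : ℤ) =
        2 * (2 * n + 3) * (5 * (n + 1) * (n + 2) + 2) * Wstar 4 (n + 1) :=
      mod_cast Wstar_four_recurrence n
    rw [ih, ih'] at recurrence
    linear_combination recurrence - sum_dombSummand_recurrence n

end DombNumbers

section Divisibility

open Finset.HasAntidiagonal

theorem two_mul_four_pow {R : Type*} [Semiring R] (k : ℕ) :
    (2 * 4 ^ k : R) = 2 ^ (2 * k + 1) := by
  rw [pow_succ', pow_mul]
  norm_num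

theorem padicValNat_dombCoeff (k j : ℕ) :
    padicValNat 2 (dombCoeff (k + j) k) + s2 (3 * k + j) = 4 * s2 k + s2 j := by
  have choose_outer := s2_add_s2 (3 * k) j
  have choose_three := s2_add_s2 k (2 * k)
  have choose_two := s2_add_s2 k k
  rw [← two_mul k, s2_two_mul] at choose_two
  rw [show k + 2 * k = 3 * k by ring, s2_two_mul] at choose_three
  have choose_ne_zero {a b : ℕ} (h : b ≤ a) : a.choose b ≠ 0 := (Nat.choose_pos h).ne'
  rw [dombCoeff, show k + j + 2 * k = 3 * k + j by ring,
    padicValNat.mul (mul_ne_zero (choose_ne_zero (by omega)) (choose_ne_zero (by omega)))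
      (pow_ne_zero 2 (choose_ne_zero (by omega))),
    padicValNat.mul (choose_ne_zero (by omega)) (choose_ne_zero (by omega)), padicValNat.pow]
  omega

theorem dombCoeff_ne_zero {n k : ℕ} (h : k ≤ n) : dombCoeff n k ≠ 0 :=
  (Nat.mul_pos (Nat.mul_pos (Nat.choose_pos (by omega)) (Nat.choose_pos (by omega)))
    (pow_pos (Nat.choose_pos (by omega)) 2)).ne'

theorem two_mul_four_pow_s2_dvd_dombSummand {n k : ℕ} (h : k < n) :
    (2 * 4 ^ s2 n : ℤ) ∣ dombSummand n k := by
  obtain ⟨j, rfl⟩ := Nat.exists_eq_add_of_le h.le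
  have valuation := padicValNat_dombCoeff k j
  have carry_sum : s2 (3 * k + j) ≤ s2 (k + j) + s2 k := by
    have := s2_add_le (k + j) (2 * k)
    rwa [s2_two_mul, show k + j + 2 * k = 3 * k + j by ring] at this
  have carry := s2_add_le k j
  have small := s2_le_self j
  have exponent_le : 2 * s2 (k + j) + 1 ≤ 4 * j + padicValNat 2 (dombCoeff (k + j) k) := by omega
  have nat_dvd : 2 * 4 ^ s2 (k + j) ∣ 16 ^ j * dombCoeff (k + j) k :=
    calc 2 * 4 ^ s2 (k + j) = 2 ^ (2 * s2 (k + j) + 1) := two_mul_four_pow _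
      _ ∣ 2 ^ (4 * j + padicValNat 2 (dombCoeff (k + j) k)) := pow_dvd_pow 2 exponent_le
      _ = 16 ^ j * 2 ^ padicValNat 2 (dombCoeff (k + j) k) := by rw [pow_add, pow_mul]; norm_num
      _ ∣ _ := mul_dvd_mul_left _ pow_padicValNat_dvd
  rw [dombSummand, Nat.add_sub_cancel_left, mul_assoc]
  have int_dvd : (2 * 4 ^ s2 (k + j) : ℤ) ∣ 16 ^ j * dombCoeff (k + j) k := mod_cast nat_dvd
  exact int_dvd.mul_left _

theorem Wstar_four_modEq (n : ℕ) :
    (Wstar 4 n : ℤ) ≡ (-1) ^ n * dombCoeff n n [ZMOD 2 * 4 ^ s2 n] := by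
  rw [Wstar_four_eq_sum_dombSummand, Finset.sum_range_succ]
  have top : dombSummand n n = (-1) ^ n * dombCoeff n n := by simp [dombSummand]
  rw [top]
  have rest : (2 * 4 ^ s2 n : ℤ) ∣ ∑ k ∈ Finset.range n, dombSummand n k :=
    Finset.dvd_sum fun k hk => two_mul_four_pow_s2_dvd_dombSummand (Finset.mem_range.1 hk)
  simpa using (Int.modEq_zero_iff_dvd.2 rest).add_right ((-1) ^ n * dombCoeff n n)

theorem two_pow_dvd_dombCoeff_self_iff (n e : ℕ) :
    2 ^ e ∣ dombCoeff n n ↔ e + s2 (3 * n) ≤ 4 * s2 n := by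
  have valuation := padicValNat_dombCoeff n 0
  rw [add_zero, add_zero, show s2 0 = 0 from rfl] at valuation
  rw [padicValNat_dvd_iff_le (dombCoeff_ne_zero le_rfl)]
  omega

theorem two_pow_dvd_Wstar_four_iff {n e : ℕ} (he : e ≤ 2 * s2 n + 1) :
    2 ^ e ∣ Wstar 4 n ↔ e + s2 (3 * n) ≤ 4 * s2 n := by
  have modulus_dvd : (2 ^ e : ℤ) ∣ 2 * 4 ^ s2 n := by
    simpa only [two_mul_four_pow] using pow_dvd_pow 2 he
  have congruent := (Wstar_four_modEq n).of_dvd modulus_dvd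
  have unit : IsUnit ((-1) ^ n : ℤ) := isUnit_neg_one.pow n
  rw [← two_pow_dvd_dombCoeff_self_iff, ← Int.natCast_dvd_natCast, ← Int.natCast_dvd_natCast]
  push_cast
  rw [← unit.dvd_mul_left (b := (dombCoeff n n : ℤ)), ← Int.modEq_zero_iff_dvd,
    ← Int.modEq_zero_iff_dvd]
  exact ⟨congruent.symm.trans, congruent.trans⟩

theorem four_pow_s2_dvd_Wstar_four (n : ℕ) : 4 ^ s2 n ∣ Wstar 4 n := by
  have s2_three := s2_three_mul_le n
  have two_pow_dvd : 2 ^ (2 * s2 n) ∣ Wstar 4 n :=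
    (two_pow_dvd_Wstar_four_iff (Nat.le_succ _)).2 (by omega)
  simpa [pow_mul] using two_pow_dvd

theorem mul_four_pow_s2_dvd_choose_sq_mul {c i j a b : ℕ}
    (ha : c * 4 ^ s2 i ∣ a) (hb : 4 ^ s2 j ∣ b) :
    c * 4 ^ s2 (i + j) ∣ (i + j).choose i ^ 2 * (a * b) :=
  calc c * 4 ^ s2 (i + j) ∣ c * 4 ^ (s2 i + s2 j) :=
        mul_dvd_mul_left c (pow_dvd_pow 4 (s2_add_le i j))
    _ = c * 4 ^ s2 i * 4 ^ s2 j := by rw [pow_add, mul_assoc]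
    _ ∣ a * b := mul_dvd_mul ha hb
    _ ∣ _ := dvd_mul_left _ _

theorem four_pow_s2_dvd_Wstar_four_mul (m n : ℕ) : 4 ^ s2 n ∣ Wstar (4 * m) n := by
  induction m generalizing n with
  | zero =>
    rcases eq_or_ne n 0 with rfl | hn
    · simp [s2]
    · simp [Wstar_zero_left hn]
  | succ m ih =>
    rw [mul_add_one, Wstar_add]
    refine Finset.dvd_sum fun p hp => ?_
    obtain rfl := mem_antidiagonal.1 hp
    simpa using mul_four_pow_s2_dvd_choose_sq_mul (c := 1) (by simpa using ih p.1)
      (four_pow_s2_dvd_Wstar_four p.2)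

theorem two_mul_dvd_sum_antidiagonal {f : ℕ × ℕ → ℕ} {c n : ℕ}
    (swap_eq : ∀ p ∈ antidiagonal n, f p.swap = f p) (dvd : ∀ p ∈ antidiagonal n, c ∣ f p)
    (diagonal_dvd : ∀ i, i + i = n → 2 * c ∣ f (i, i)) :
    2 * c ∣ ∑ p ∈ antidiagonal n, f p := by
  rw [← ZMod.natCast_eq_zero_iff, Nat.cast_sum]
  refine Finset.sum_involution (fun p _ => p.swap) (fun p hp => ?_) (fun p hp ne_zero fixed => ?_)
    (fun p hp => swap_mem_antidiagonal.2 hp) (fun p _ => p.swap_swap)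
  · rw [swap_eq p hp, ← Nat.cast_add, ← two_mul, ZMod.natCast_eq_zero_iff]
    exact mul_dvd_mul_left 2 (dvd p hp)
  · obtain ⟨i, j⟩ := p
    obtain rfl : j = i := congrArg Prod.fst fixed
    exact ne_zero ((ZMod.natCast_eq_zero_iff _ _).2 (diagonal_dvd j (mem_antidiagonal.1 hp)))

theorem two_mul_four_pow_s2_dvd_Wstar_eight_mul {n : ℕ} (hn : n ≠ 0) (m : ℕ) :
    2 * 4 ^ s2 n ∣ Wstar (8 * m) n := by
  have halves_dvd := four_pow_s2_dvd_Wstar_four_mul m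
  rw [show 8 * m = 4 * m + 4 * m by ring, Wstar_add]
  refine two_mul_dvd_sum_antidiagonal (fun p hp => ?_) (fun p hp => ?_) fun i hi => ?_
  · rw [Prod.fst_swap, Prod.snd_swap, mul_comm (Wstar _ p.2),
      Nat.choose_symm_of_eq_add (mem_antidiagonal.1 hp).symm]
  · obtain rfl := mem_antidiagonal.1 hp
    simpa using mul_four_pow_s2_dvd_choose_sq_mul (c := 1) (by simpa using halves_dvd p.1)
      (halves_dvd p.2)
  · have two_dvd_choose : 2 ∣ n.choose i := by
      rw [← hi, ← two_mul]
      exact Nat.two_dvd_centralBinom_of_one_le (by omega)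
    have s2_eq : s2 n = s2 i := by rw [← hi, ← two_mul, s2_two_mul]
    rw [s2_eq]
    exact mul_dvd_mul (dvd_pow two_dvd_choose two_ne_zero) ((halves_dvd i).mul_right _)

theorem Wstar_eight_mul_add_four_modEq (m n : ℕ) :
    Wstar (8 * m + 4) n ≡ Wstar 4 n [MOD 2 * 4 ^ s2 n] := by
  have first_mem : (0, n) ∈ antidiagonal n := by simp
  have rest_dvd : 2 * 4 ^ s2 n ∣ ∑ p ∈ (antidiagonal n).erase (0, n),
      n.choose p.1 ^ 2 * (Wstar (8 * m) p.1 * Wstar 4 p.2) := by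
    refine Finset.dvd_sum fun p hp => ?_
    obtain ⟨p_ne, p_mem⟩ := Finset.mem_erase.1 hp
    obtain rfl := mem_antidiagonal.1 p_mem
    have fst_ne_zero : p.1 ≠ 0 := fun h => p_ne (Prod.ext h (by simp [h]))
    exact mul_four_pow_s2_dvd_choose_sq_mul
      (two_mul_four_pow_s2_dvd_Wstar_eight_mul fst_ne_zero m) (four_pow_s2_dvd_Wstar_four p.2)
  rw [Wstar_add, ← Finset.add_sum_erase _ _ first_mem]
  simpa [Wstar_zero_right] using ((Nat.modEq_zero_iff_dvd.2 rest_dvd).add_left (Wstar 4 n))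

theorem two_pow_dvd_Wstar_iff {d n e : ℕ} (hd : d % 8 = 4) (he : e ≤ 2 * s2 n + 1) :
    2 ^ e ∣ Wstar d n ↔ e + s2 (3 * n) ≤ 4 * s2 n := by
  have modulus_dvd : 2 ^ e ∣ 2 * 4 ^ s2 n := by
    simpa only [two_mul_four_pow] using pow_dvd_pow 2 he
  rw [← two_pow_dvd_Wstar_four_iff he, ← Nat.div_add_mod d 8, hd]
  exact ((Wstar_eight_mul_add_four_modEq (d / 8) n).of_dvd modulus_dvd).dvd_iff dvd_rfl

theorem mod_eight_eq_four_of_padicValNat_two {d : ℕ} (h : padicValNat 2 d = 2) : d % 8 = 4 := by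
  have hd : d ≠ 0 := by rintro rfl; simp at h
  have four_dvd : 2 ^ 2 ∣ d := (padicValNat_dvd_iff_le hd).2 h.ge
  have not_eight_dvd : ¬2 ^ 3 ∣ d := fun dvd => by
    have := (padicValNat_dvd_iff_le hd).1 dvd
    omega
  omega

theorem padicValNat_Wstar_eq_iff {d : ℕ} (hd : d % 8 = 4) (n : ℕ) :
    padicValNat 2 (Wstar d n) = 2 * s2 n ↔ s2 (3 * n) = 2 * s2 n := by
  have s2_three := s2_three_mul_le n
  have Wstar_ne_zero := (Wstar_pos (show 0 < d by omega) n).ne'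
  have le_iff := two_pow_dvd_Wstar_iff (n := n) hd (Nat.le_succ (2 * s2 n))
  have lt_iff := two_pow_dvd_Wstar_iff (n := n) hd le_rfl
  rw [padicValNat_dvd_iff_le Wstar_ne_zero] at le_iff lt_iff
  omega

theorem padicValNat_W {d : ℕ} (hd : 0 < d) (n : ℕ) :
    padicValNat 2 (W d n) = s2 n + padicValNat 2 (Wstar d n) := by
  have central := s2_add_s2 n n
  rw [← two_mul n, s2_two_mul] at central
  rw [W, padicValNat.mul (Nat.choose_pos (by omega)).ne' (Wstar_pos hd n).ne']
  omega

end Divisibility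

theorem stmt_3 (d n : ℕ) (hd : 0 < d) (hd2 : padicValNat 2 d = 2) (hn : 0 < n) :
    padicValNat 2 (W d n) = 3 * s2 n ↔
      ∀ i : ℕ, ¬(n.testBit i = true ∧ n.testBit (i + 1) = true) := by
  have hd_mod := mod_eight_eq_four_of_padicValNat_two hd2
  calc padicValNat 2 (W d n) = 3 * s2 n
      ↔ padicValNat 2 (Wstar d n) = 2 * s2 n := by rw [padicValNat_W hd]; omega
    _ ↔ s2 (3 * n) = 2 * s2 n := padicValNat_Wstar_eq_iff hd_mod n
    _ ↔ _ := s2_three_mul_eq_iff_testBit n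
end

section
/- Let g and n be positive integers and let d = 2g. Then W*_d(n) = ∑_{y₁+y₂+⋯+y_g=n, yᵢ ≥ 0} (n!/(y₁!·y₂!⋯y_g!))² · binom(2y₁, y₁)·binom(2y₂, y₂)⋯binom(2y_g, y_g). -/
/-!
Writing `E(a) = ∑ₘ aₘ tᵐ / m!²`, the coefficients of a product of such series are sums over tuples
weighted by squared multinomial coefficients. In particular `E(1) ^ d = E(W*_d)`, so factoring
`E(1) ^ (k₁ + ⋯ + k_g)` as `∏ E(1) ^ kᵢ` expresses `W*` of a large alphabet through `W*` of the
blocks of letters. Blocks of two letters bring in the central binomial coefficients, since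
`W*_2(m) = ∑ᵢ binom(m, i)²`.
-/

open Finset PowerSeries
open scoped Nat

theorem coeff_prod_univ_eq_sum_antidiagonalTuple {R : Type*} [CommSemiring R] {g : ℕ}
    (f : Fin g → R⟦X⟧) (n : ℕ) :
    coeff n (∏ i, f i) = ∑ y ∈ Nat.antidiagonalTuple g n, ∏ i, coeff (y i) (f i) := by
  rw [coeff_prod]
  refine sum_equiv Finsupp.equivFunOnFinite (fun y => ?_) fun _ _ => rfl
  simp [Nat.mem_antidiagonalTuple]

section DoublyExponential

variable {K : Type*} [Semifield K] [CharZero K]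

theorem natCast_multinomial {ι : Type*} (s : Finset ι) (f : ι → ℕ) :
    (Nat.multinomial s f : K) = (∑ i ∈ s, f i)! / ∏ i ∈ s, ((f i)! : K) := by
  have prod_ne_zero : ∏ i ∈ s, ((f i)! : K) ≠ 0 :=
    prod_ne_zero_iff.2 fun i _ => Nat.cast_ne_zero.2 (f i).factorial_ne_zero
  rw [eq_div_iff prod_ne_zero, mul_comm]
  exact_mod_cast Nat.multinomial_spec s f

/-- The doubly exponential generating function `∑ₘ aₘ tᵐ / m!²` of a sequence `a`, whose products
turn sums weighted by squared multinomial coefficients into power series identities. -/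
def doublyExpSeries (a : ℕ → K) : K⟦X⟧ :=
  PowerSeries.mk fun m => a m / (m ! : K) ^ 2

theorem factorial_sq_mul_coeff_prod_doublyExpSeries {g : ℕ} (a : Fin g → ℕ → K) (n : ℕ) :
    (n ! : K) ^ 2 * coeff n (∏ i, doublyExpSeries (a i)) =
      ∑ y ∈ Nat.antidiagonalTuple g n,
        (Nat.multinomial univ y : K) ^ 2 * ∏ i, a i (y i) := by
  rw [coeff_prod_univ_eq_sum_antidiagonalTuple, mul_sum]
  refine sum_congr rfl fun y hy => ?_
  rw [natCast_multinomial, Nat.mem_antidiagonalTuple.1 hy]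
  simp only [doublyExpSeries, coeff_mk, prod_div_distrib, prod_pow]
  ring

theorem doublyExpSeries_Wstar (d : ℕ) :
    doublyExpSeries (fun m => (Wstar d m : K)) = doublyExpSeries 1 ^ d := by
  ext n
  have factorial_sq_ne_zero : (n ! : K) ^ 2 ≠ 0 :=
    pow_ne_zero 2 (Nat.cast_ne_zero.2 n.factorial_ne_zero)
  have coeff_pow := factorial_sq_mul_coeff_prod_doublyExpSeries (fun _ : Fin d => (1 : ℕ → K)) n
  simp only [Fin.prod_const, Pi.one_apply, one_pow, mul_one] at coeff_pow
  rw [doublyExpSeries, coeff_mk, div_eq_iff factorial_sq_ne_zero, mul_comm, coeff_pow, Wstar]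
  push_cast
  rfl

end DoublyExponential

theorem Wstar_two (n : ℕ) : Wstar 2 n = (2 * n).choose n := by
  rw [Wstar, Nat.antidiagonalTuple_two, sum_map, ← Nat.sum_range_choose_sq,
    ← Nat.sum_antidiagonal_eq_sum_range_succ_mk (fun p => n.choose p.1 ^ 2)]
  refine sum_congr rfl fun p hp => ?_
  have binomial_eq : Nat.multinomial univ ![p.1, p.2] = n.choose p.1 := by
    rw [Nat.multinomial_univ_two, ← mem_antidiagonal.1 hp, Nat.choose_symm_add, Nat.add_choose]
  exact congrArg (· ^ 2) binomial_eq

theorem stmt_7_general {g : ℕ} (k : Fin g → ℕ) (n : ℕ) :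
    Wstar (∑ i, k i) n =
      ∑ y ∈ Nat.antidiagonalTuple g n,
        Nat.multinomial univ y ^ 2 * ∏ i, Wstar (k i) (y i) := by
  have series_eq : doublyExpSeries (fun m => (Wstar (∑ i, k i) m : ℚ)) =
      ∏ i, doublyExpSeries fun m => (Wstar (k i) m : ℚ) := by
    simp only [doublyExpSeries_Wstar, prod_pow_eq_pow_sum]
  have cast_eq : (Wstar (∑ i, k i) n : ℚ) = ∑ y ∈ Nat.antidiagonalTuple g n,
      (Nat.multinomial univ y : ℚ) ^ 2 * ∏ i, (Wstar (k i) (y i) : ℚ) := by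
    rw [← factorial_sq_mul_coeff_prod_doublyExpSeries (fun i m => (Wstar (k i) m : ℚ)), ← series_eq,
      doublyExpSeries, coeff_mk, mul_div_cancel₀ _ (by positivity)]
  exact_mod_cast cast_eq

theorem stmt_7 (g n : ℕ) (hg : 0 < g) (hn : 0 < n) :
    Wstar (2 * g) n =
      ∑ y ∈ Finset.Nat.antidiagonalTuple g n,
        (Nat.multinomial Finset.univ y) ^ 2 *
          ∏ i : Fin g, Nat.choose (2 * y i) (y i) := by
  simpa [Wstar_two, mul_comm] using stmt_7_general (fun _ : Fin g => 2) n
end
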